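/- There exists a sequence of maps ζ_n : ℤ² → P(SL(2,ℤ)), n ∈ ℕ, where P(SL(2,ℤ)) denotes the set of probability densities on SL(2,ℤ), such that: (i) for every n ∈ ℕ and every a ∈ ℤ², ‖ζ_n(y + a) − ζ_n(y)‖₁ → 0 along the cofinite filter on ℤ²; and (ii) for every g ∈ SL(2,ℤ), the limit superior along the cofinite filter of y ↦ ‖ζ_n(g·y) − g·ζ_n(y)‖₁ tends to 0 as n → ∞. (This is the function-level formulation of the Proposition: the action of SL(2,ℤ) on the Higson corona of ℤ² is topologically amenable.) -/

import Mathlib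

open Filter Topology

abbrev SLZ := Matrix.SpecialLinearGroup (Fin 2) ℤ

/-- The quadratic weight `|h⁻¹y|² + ε |h⁻¹Jy|²`. -/
def qf (ε : ℝ) (y : Fin 2 → ℤ) (h : SLZ) : ℝ :=
  ((h 1 1 : ℝ) * y 0 - h 0 1 * y 1) ^ 2 + ((h 0 0 : ℝ) * y 1 - h 1 0 * y 0) ^ 2 +
  ε * ((-(h 1 1 : ℝ) * y 1 - h 0 1 * y 0) ^ 2 + ((h 1 0 : ℝ) * y 1 + h 0 0 * y 0) ^ 2)

/-- squared Frobenius norm -/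
def fr (h : SLZ) : ℝ := (h 0 0 : ℝ) ^ 2 + (h 0 1 : ℝ) ^ 2 + (h 1 0 : ℝ) ^ 2 + (h 1 1 : ℝ) ^ 2

/-- squared norm of a vector -/
def nv (y : Fin 2 → ℤ) : ℝ := (y 0 : ℝ) ^ 2 + (y 1 : ℝ) ^ 2

lemma det_real (h : SLZ) : (h 0 0 : ℝ) * h 1 1 - h 0 1 * h 1 0 = 1 := by
  have := h.det_coe
  rw [Matrix.det_fin_two] at this
  exact_mod_cast this

lemma two_le_fr (h : SLZ) : 2 ≤ fr h := by
  have := det_real h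
  unfold fr
  nlinarith [sq_nonneg ((h 0 0 : ℝ) - h 1 1), sq_nonneg ((h 0 1 : ℝ) + h 1 0)]

lemma nv_pos {y : Fin 2 → ℤ} (hy : y ≠ 0) : 0 < nv y := by
  unfold nv
  by_contra hc
  apply hy
  have h0 : (y 0 : ℝ) = 0 := by nlinarith [sq_nonneg (y 0 : ℝ), sq_nonneg (y 1 : ℝ)]
  have h1 : (y 1 : ℝ) = 0 := by nlinarith [sq_nonneg (y 0 : ℝ), sq_nonneg (y 1 : ℝ)]
  ext i
  fin_cases i
  · exact_mod_cast h0
  · exact_mod_cast h1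

lemma qf_lower (ε c : ℝ) (hc : c ≤ ε) (hc1 : c ≤ 1) (y : Fin 2 → ℤ) (h : SLZ) :
    c * (nv y * fr h) ≤ qf ε y h := by
  have e : nv y * fr h = ((h 1 1 : ℝ) * y 0 - h 0 1 * y 1) ^ 2 +
    ((h 0 0 : ℝ) * y 1 - h 1 0 * y 0) ^ 2 +
    ((-(h 1 1 : ℝ) * y 1 - h 0 1 * y 0) ^ 2 + ((h 1 0 : ℝ) * y 1 + h 0 0 * y 0) ^ 2) := by
    unfold nv fr; ring
  rw [e]; unfold qf
  have h1 : 0 ≤ ((h 1 1 : ℝ) * y 0 - h 0 1 * y 1) ^ 2 + ((h 0 0 : ℝ) * y 1 - h 1 0 * y 0) ^ 2 := by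
    positivity
  have h2 : 0 ≤ (-(h 1 1 : ℝ) * y 1 - h 0 1 * y 0) ^ 2 + ((h 1 0 : ℝ) * y 1 + h 0 0 * y 0) ^ 2 := by
    positivity
  nlinarith [mul_nonneg (sub_nonneg.2 hc) h2, mul_nonneg (sub_nonneg.2 hc1) h1]

lemma qf_pos {ε : ℝ} (hε : 0 < ε) {y : Fin 2 → ℤ} (hy : y ≠ 0) (h : SLZ) : 0 < qf ε y h := by
  have h1 := qf_lower ε (min ε 1) (min_le_left _ _) (min_le_right _ _) y h
  have h2 := nv_pos hy
  have h3 := two_le_fr h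
  have : 0 < min ε 1 := by positivity
  have : 0 < min ε 1 * (nv y * fr h) := by positivity
  linarith

/-- the (unnormalized) density -/
noncomputable def kf (ε : ℝ) (y : Fin 2 → ℤ) (h : SLZ) : ℝ := ((qf ε y h) ^ 4)⁻¹

lemma kf_pos {ε : ℝ} (hε : 0 < ε) {y : Fin 2 → ℤ} (hy : y ≠ 0) (h : SLZ) : 0 < kf ε y h := by
  have := qf_pos hε hy h
  unfold kf; positivity

lemma summable_one : Summable (fun x : ℤ => (1 + (x : ℝ) ^ 2)⁻¹) := by
  have h : Summable (fun x : ℤ => 1 / (x : ℝ) ^ 2) :=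
    Real.summable_one_div_int_pow.2 (by norm_num)
  refine Summable.of_norm_bounded_eventually h ?_
  have : ∀ᶠ x : ℤ in cofinite, x ≠ 0 := eventually_cofinite_ne 0
  filter_upwards [this] with x hx
  have hx' : (x : ℝ) ≠ 0 := by exact_mod_cast hx
  rw [Real.norm_of_nonneg (by positivity), one_div]
  gcongr
  linarith

lemma summable_fr : Summable (fun h : SLZ => ((fr h) ^ 4)⁻¹) := by
  have h2 : Summable (fun x : ℤ × ℤ => (1 + (x.1 : ℝ) ^ 2)⁻¹ * (1 + (x.2 : ℝ) ^ 2)⁻¹) :=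
    summable_one.mul_of_nonneg summable_one (fun x => by positivity) (fun x => by positivity)
  have h4 := h2.mul_of_nonneg h2 (fun x => by positivity) (fun x => by positivity)
  let φ : SLZ → (ℤ × ℤ) × (ℤ × ℤ) := fun h => ((h 0 0, h 0 1), (h 1 0, h 1 1))
  have hφ : Function.Injective φ := by
    intro g h hgh
    simp only [φ, Prod.mk.injEq] at hgh
    ext i j
    fin_cases i <;> fin_cases j <;> simp [hgh]
  refine Summable.of_nonneg_of_le (fun h => by have := two_le_fr h; positivity) ?_
    (h4.comp_injective hφ)
  intro h
  simp only [Function.comp, φ, ← mul_inv]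
  have h0 := two_le_fr h
  unfold fr at h0 ⊢
  apply inv_anti₀ (by positivity)
  set a := (h 0 0 : ℝ) ^ 2
  set b := (h 0 1 : ℝ) ^ 2
  set c := (h 1 0 : ℝ) ^ 2
  set d := (h 1 1 : ℝ) ^ 2
  have ha : 0 ≤ a := sq_nonneg _
  have hb : 0 ≤ b := sq_nonneg _
  have hc : 0 ≤ c := sq_nonneg _
  have hd : 0 ≤ d := sq_nonneg _
  have e1 : (1 + a) * (1 + b) ≤ (a + b + c + d) ^ 2 := by nlinarith [sq_nonneg (a - b)]
  have e2 : (1 + c) * (1 + d) ≤ (a + b + c + d) ^ 2 := by nlinarith [sq_nonneg (c - d)]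
  calc (1 + a) * (1 + b) * ((1 + c) * (1 + d)) ≤ (a + b + c + d) ^ 2 * (a + b + c + d) ^ 2 := by
        gcongr
    _ = _ := by ring

lemma summable_kf {ε : ℝ} (hε : 0 < ε) {y : Fin 2 → ℤ} (hy : y ≠ 0) : Summable (kf ε y) := by
  have hn := nv_pos hy
  have hm : 0 < min ε 1 := by positivity
  refine Summable.of_nonneg_of_le (fun h => (kf_pos hε hy h).le) ?_
    (summable_fr.mul_left (((min ε 1 * nv y) ^ 4)⁻¹))
  intro h
  have h1 := qf_lower ε (min ε 1) (min_le_left _ _) (min_le_right _ _) y h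
  have h3 := two_le_fr h
  unfold kf
  rw [← mul_inv, ← mul_pow]
  apply inv_anti₀ (by positivity)
  rw [← mul_assoc] at h1
  gcongr

lemma inv_pow_close {q q' δ : ℝ} (hq : 0 < q) (hδ : δ ≤ 1 / 2) (hd : |q' - q| ≤ δ * q) :
    |(q' ^ 4)⁻¹ - (q ^ 4)⁻¹| ≤ 30 * δ * (q ^ 4)⁻¹ := by
  have hh := abs_le.1 hd
  have hq' : q / 2 ≤ q' := by nlinarith
  have hq'0 : 0 < q' := by linarith
  obtain ⟨r, hr⟩ : ∃ r, r = q / q' := ⟨_, rfl⟩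
  have hr0 : 0 < r := by rw [hr]; positivity
  have hr2 : r ≤ 2 := by rw [hr, div_le_iff₀ hq'0]; linarith
  have e : r - 1 = (q - q') / q' := by rw [hr]; field_simp
  have hr1 : |r - 1| ≤ 2 * δ := by
    rw [e, abs_div, abs_of_pos hq'0, div_le_iff₀ hq'0, abs_sub_comm]
    nlinarith
  have hδ0 : 0 ≤ δ := by nlinarith [abs_nonneg (r - 1)]
  have e2 : (q' ^ 4)⁻¹ - (q ^ 4)⁻¹ = ((r - 1) * ((r + 1) * (r ^ 2 + 1))) * (q ^ 4)⁻¹ := by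
    rw [hr]; field_simp; ring
  rw [e2, abs_mul, abs_of_pos (by positivity : 0 < (q ^ 4)⁻¹), abs_mul,
    abs_of_pos (by positivity : 0 < (r + 1) * (r ^ 2 + 1))]
  refine mul_le_mul_of_nonneg_right ?_ (by positivity)
  calc |r - 1| * ((r + 1) * (r ^ 2 + 1)) ≤ (2 * δ) * ((2 + 1) * (2 ^ 2 + 1)) := by gcongr
    _ = 30 * δ := by ring

/-- `ℓ¹(SL(2,ℤ))` -/
abbrev L1 := lp (fun _ : SLZ => ℝ) 1

lemma memL1 {f : SLZ → ℝ} (hf : Summable f) : Memℓp f 1 := by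
  apply memℓp_gen
  simpa using hf.abs

lemma L1.summable (f : L1) : Summable (fun h => f h) := by
  have := (lp.memℓp f).summable (by norm_num)
  simpa [summable_abs_iff] using this

lemma L1.norm_eq (f : L1) : ‖f‖ = ∑' h, |f h| := by
  rw [lp.norm_eq_tsum_rpow (by norm_num)]
  simp

open Classical in
/-- normalisation -/
noncomputable def nrm (k : SLZ → ℝ) : L1 :=
  if hk : Summable k then ⟨fun h => k h / ∑' x, k x, memL1 (hk.div_const _)⟩ else 0

lemma nrm_apply {k : SLZ → ℝ} (hk : Summable k) (h : SLZ) : nrm k h = k h / ∑' x, k x := by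
  unfold nrm; rw [dif_pos hk]

lemma nrm_nonneg {k : SLZ → ℝ} (hk : Summable k) (h0 : ∀ h, 0 < k h) (h : SLZ) : 0 ≤ nrm k h := by
  rw [nrm_apply hk]
  exact div_nonneg (h0 h).le (tsum_nonneg fun x => (h0 x).le)

lemma nrm_tsum {k : SLZ → ℝ} (hk : Summable k) (h0 : ∀ h, 0 < k h) : ∑' h, nrm k h = 1 := by
  simp_rw [nrm_apply hk]
  rw [tsum_div_const]
  exact div_self (hk.tsum_pos (fun x => (h0 x).le) 1 (h0 1)).ne'

lemma nrm_norm {k : SLZ → ℝ} (hk : Summable k) (h0 : ∀ h, 0 < k h) : ‖nrm k‖ = 1 := by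
  rw [L1.norm_eq, ← nrm_tsum hk h0]
  exact tsum_congr fun h => abs_of_nonneg (nrm_nonneg hk h0 h)

lemma nrm_close {k k' : SLZ → ℝ} (hk : Summable k) (h0 : ∀ h, 0 < k h) (hk' : Summable k')
    (h0' : ∀ h, 0 < k' h) {δ : ℝ} (hd : ∀ h, |k' h - k h| ≤ δ * k h) :
    ‖nrm k' - nrm k‖ ≤ 2 * δ := by
  have hS := hk.tsum_pos (fun x => (h0 x).le) 1 (h0 1)
  have hS' := hk'.tsum_pos (fun x => (h0' x).le) 1 (h0' 1)
  have hdiff : |∑' x, k' x - ∑' x, k x| ≤ δ * ∑' x, k x := by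
    rw [← hk'.tsum_sub hk, ← tsum_mul_left]
    calc |∑' x, (k' x - k x)| ≤ ∑' x, |k' x - k x| := by
          simpa using norm_tsum_le_tsum_norm (f := fun x => k' x - k x) (hk'.sub hk).norm
      _ ≤ _ := (hk'.sub hk).abs.tsum_le_tsum hd (hk.mul_left δ)
  rw [L1.norm_eq]
  set S := ∑' x, k x with hSdef
  set S' := ∑' x, k' x with hSdef'
  have hb : ∀ h, |(nrm k' - nrm k) h| ≤ δ * k h / S + δ * k' h / S' := by
    intro h
    have e : (nrm k' - nrm k) h = (k' h - k h) / S - (k' h / S') * ((S' - S) / S) := by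
      rw [lp.coeFn_sub, Pi.sub_apply, nrm_apply hk, nrm_apply hk', ← hSdef, ← hSdef']
      field_simp; ring
    rw [e]
    refine (abs_sub _ _).trans (add_le_add ?_ ?_)
    · rw [abs_div, abs_of_pos hS]
      gcongr
      exact hd h
    · rw [abs_mul, abs_div (S' - S), abs_of_pos hS, abs_of_pos (div_pos (h0' h) hS')]
      have : |S' - S| / S ≤ δ := by rw [div_le_iff₀ hS]; exact hdiff
      calc k' h / S' * (|S' - S| / S) ≤ k' h / S' * δ :=
            mul_le_mul_of_nonneg_left this (div_pos (h0' h) hS').le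
        _ = _ := by ring
  have s1 : Summable fun h => δ * k h / S := (hk.mul_left δ).div_const S
  have s2 : Summable fun h => δ * k' h / S' := (hk'.mul_left δ).div_const S'
  calc ∑' h, |(nrm k' - nrm k) h| ≤ ∑' h, (δ * k h / S + δ * k' h / S') :=
        (L1.summable _).abs.tsum_le_tsum hb (s1.add s2)
    _ = 2 * δ := by
        rw [s1.tsum_add s2, tsum_div_const, tsum_div_const, tsum_mul_left, tsum_mul_left,
          ← hSdef, ← hSdef']
        field_simp; ring

lemma nrm_translate {k : SLZ → ℝ} (hk : Summable k) (g h : SLZ) :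
    nrm k (g⁻¹ * h) = nrm (fun x => k (g⁻¹ * x)) h := by
  have hk2 : Summable (fun x => k (g⁻¹ * x)) := (Equiv.mulLeft g⁻¹).summable_iff.2 hk
  rw [nrm_apply hk, nrm_apply hk2]
  congr 1
  exact ((Equiv.mulLeft g⁻¹).tsum_eq k).symm

lemma shift_bound (f : ℤ → L1) (hf : ∀ j, ‖f j‖ ≤ 1) (a b : ℤ) (hab : a ≤ b) (m : ℤ) :
    ‖∑ j ∈ Finset.Ico a b, (f (j + m) - f j)‖ ≤ 2 * |(m : ℝ)| := by
  have step : ∀ c : ℤ, ‖∑ j ∈ Finset.Ico a b, (f (j + (c + 1)) - f (j + c))‖ ≤ 2 := by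
    intro c
    have : ∑ j ∈ Finset.Ico a b, (f (j + (c + 1)) - f (j + c)) = f (b + c) - f (a + c) := by
      induction b, hab using Int.leInduction with
      | base => simp
      | succ n hn ih =>
        rw [← Finset.insert_Ico_right_eq_Ico_add_one hn, Finset.sum_insert (by simp), ih,
          add_right_comm n 1 c, add_assoc n c 1]
        abel
    rw [this]
    refine (norm_sub_le _ _).trans ?_
    linarith [hf (b + c), hf (a + c)]
  induction m using Int.induction_on with
  | zero => simp
  | succ i ih =>
    have e : ∑ j ∈ Finset.Ico a b, (f (j + ((i : ℤ) + 1)) - f j) =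
      ∑ j ∈ Finset.Ico a b, (f (j + ((i : ℤ) + 1)) - f (j + i)) +
      ∑ j ∈ Finset.Ico a b, (f (j + (i : ℤ)) - f j) := by
      rw [← Finset.sum_add_distrib]; exact Finset.sum_congr rfl fun j _ => by abel
    rw [e]
    refine (norm_add_le _ _).trans ?_
    have h1 := step i
    push_cast at ih ⊢
    rw [abs_of_nonneg (by positivity)] at ih ⊢
    linarith
  | pred i ih =>
    have e : ∑ j ∈ Finset.Ico a b, (f (j + (-(i : ℤ) - 1)) - f j) =
      ∑ j ∈ Finset.Ico a b, (f (j + (-(i : ℤ))) - f j) -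
      ∑ j ∈ Finset.Ico a b, (f (j + ((-(i : ℤ) - 1) + 1)) - f (j + (-(i : ℤ) - 1))) := by
      rw [← Finset.sum_sub_distrib]
      refine Finset.sum_congr rfl fun j _ => ?_
      rw [sub_add_cancel]; abel
    rw [e]
    refine (norm_sub_le _ _).trans ?_
    have h1 := step (-(i : ℤ) - 1)
    push_cast at ih ⊢
    have e1 : |(-(i:ℝ))| = i := by rw [abs_neg]; simp
    have e2 : |(-(i:ℝ) - 1)| = i + 1 := by
      rw [← neg_add', abs_neg]; exact abs_of_nonneg (by positivity)
    rw [e1] at ih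
    rw [e2]
    linarith

lemma core_est {ε ε' α β C τ x1 x2 z1 z2 : ℝ} (hε : 0 < ε) (hε' : 0 < ε')
    (hα : |α| ≤ C) (h1 : ε ≤ ε' * β ^ 2) (h2 : ε' * β ^ 2 ≤ (1 + τ) * ε)
    (hC : ε' * C ^ 2 ≤ τ ^ 2) (hτ : 0 < τ) (hτ1 : τ ≤ 1) :
    |(x1 ^ 2 + x2 ^ 2 + ε' * ((α * x1 + β * z1) ^ 2 + (α * x2 + β * z2) ^ 2)) -
      (x1 ^ 2 + x2 ^ 2 + ε * (z1 ^ 2 + z2 ^ 2))| ≤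
      4 * τ * (x1 ^ 2 + x2 ^ 2 + ε * (z1 ^ 2 + z2 ^ 2)) := by
  have hα2 : ε' * α ^ 2 ≤ τ ^ 2 := by
    refine le_trans ?_ hC
    have : α ^ 2 ≤ C ^ 2 := by rw [← sq_abs α]; gcongr
    gcongr
  -- one-dimensional estimate
  have one : ∀ x z : ℝ, |ε' * (α * x + β * z) ^ 2 - ε * z ^ 2| ≤ 4 * τ * (x ^ 2 + ε * z ^ 2) := by
    intro x z
    have hx := sq_nonneg x
    have hz := sq_nonneg z
    have e1 : ε' * α ^ 2 * x ^ 2 ≤ τ * x ^ 2 := by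
      refine mul_le_mul_of_nonneg_right (hα2.trans ?_) hx
      nlinarith
    have e1' : 0 ≤ ε' * α ^ 2 * x ^ 2 := by positivity
    have e3 : (ε' * β ^ 2 - ε) * z ^ 2 ≤ τ * (ε * z ^ 2) := by nlinarith
    have e3' : 0 ≤ (ε' * β ^ 2 - ε) * z ^ 2 := mul_nonneg (by linarith) hz
    have hεz : 0 ≤ ε * z ^ 2 := by positivity
    have key : |2 * (ε' * α * β * x * z)| ≤ τ * x ^ 2 + 2 * τ * (ε * z ^ 2) := by
      have hb : (ε' * α * β * z) ^ 2 ≤ τ ^ 2 * (2 * (ε * z ^ 2)) := by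
        calc (ε' * α * β * z) ^ 2 = (ε' * α ^ 2) * ((ε' * β ^ 2) * z ^ 2) := by ring
          _ ≤ τ ^ 2 * ((2 * ε) * z ^ 2) := by
            have hβ : ε' * β ^ 2 ≤ 2 * ε := by nlinarith
            exact mul_le_mul hα2 (mul_le_mul_of_nonneg_right hβ hz) (by positivity) (by positivity)
          _ = _ := by ring
      set w := ε' * α * β * z
      have e : 2 * (ε' * α * β * x * z) = 2 * x * w := by simp only [w]; ring
      rw [e]
      have hw : τ * (τ * x ^ 2 + 2 * τ * (ε * z ^ 2)) ≥ τ ^ 2 * x ^ 2 + w ^ 2 := by nlinarith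
      have : τ * |2 * x * w| ≤ τ ^ 2 * x ^ 2 + w ^ 2 := by
        rw [← abs_of_pos hτ, ← abs_mul, abs_of_pos hτ, abs_le]
        constructor <;> nlinarith [sq_nonneg (τ * x + w), sq_nonneg (τ * x - w)]
      exact le_of_mul_le_mul_left (this.trans hw) hτ
    have hk := abs_le.1 key
    rw [abs_le]
    constructor <;> nlinarith [mul_nonneg hτ.le hx, mul_nonneg hτ.le hεz]
  have := (abs_add_le _ _).trans (add_le_add (one x1 z1) (one x2 z2))
  have e : (x1 ^ 2 + x2 ^ 2 + ε' * ((α * x1 + β * z1) ^ 2 + (α * x2 + β * z2) ^ 2)) -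
      (x1 ^ 2 + x2 ^ 2 + ε * (z1 ^ 2 + z2 ^ 2)) = ε' * (α * x1 + β * z1) ^ 2 - ε * z1 ^ 2 +
      (ε' * (α * x2 + β * z2) ^ 2 - ε * z2 ^ 2) := by ring
  rw [e]
  refine this.trans (le_of_eq ?_)
  ring

lemma qf_equiv (ε' : ℝ) (g k : SLZ) (y : Fin 2 → ℤ) (hy : y ≠ 0) : ∃ α : ℝ, |α| ≤ fr g ∧
    qf ε' ((g : Matrix (Fin 2) (Fin 2) ℤ).mulVec y) (g * k) =
      ((k 1 1 : ℝ) * y 0 - k 0 1 * y 1) ^ 2 + ((k 0 0 : ℝ) * y 1 - k 1 0 * y 0) ^ 2 +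
      ε' * ((α * ((k 1 1 : ℝ) * y 0 - k 0 1 * y 1) +
        (nv ((g : Matrix (Fin 2) (Fin 2) ℤ).mulVec y) / nv y) * (-(k 1 1 : ℝ) * y 1 - k 0 1 * y 0)) ^ 2 +
        (α * ((k 0 0 : ℝ) * y 1 - k 1 0 * y 0) +
        (nv ((g : Matrix (Fin 2) (Fin 2) ℤ).mulVec y) / nv y) * ((k 1 0 : ℝ) * y 1 + k 0 0 * y 0)) ^ 2) := by
  have hn := nv_pos hy
  have hd := det_real g
  have hw0 : ((((g : Matrix (Fin 2) (Fin 2) ℤ).mulVec y) 0 : ℤ) : ℝ) = g 0 0 * y 0 + g 0 1 * y 1 := by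
    simp [Matrix.mulVec, dotProduct, Fin.sum_univ_two]
  have hw1 : ((((g : Matrix (Fin 2) (Fin 2) ℤ).mulVec y) 1 : ℤ) : ℝ) = g 1 0 * y 0 + g 1 1 * y 1 := by
    simp [Matrix.mulVec, dotProduct, Fin.sum_univ_two]
  have hm : ∀ i j, (((g * k : SLZ) i j : ℤ) : ℝ) = g i 0 * k 0 j + g i 1 * k 1 j := by
    intro i j
    simp [Matrix.mul_apply, Fin.sum_univ_two]
  have hN : nv ((g : Matrix (Fin 2) (Fin 2) ℤ).mulVec y) =
      ((g 0 0 : ℝ) * y 0 + g 0 1 * y 1) ^ 2 + ((g 1 0 : ℝ) * y 0 + g 1 1 * y 1) ^ 2 := by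
    unfold nv; rw [hw0, hw1]
  rw [hN]
  unfold qf
  rw [hw0, hw1]
  simp only [hm]
  have hfr : fr g = (g 0 0 : ℝ) ^ 2 + (g 0 1 : ℝ) ^ 2 + (g 1 0 : ℝ) ^ 2 + (g 1 1 : ℝ) ^ 2 := rfl
  have hnv : nv y = (y 0 : ℝ) ^ 2 + (y 1 : ℝ) ^ 2 := rfl
  generalize (g 0 0 : ℝ) = a at *
  generalize (g 0 1 : ℝ) = b at *
  generalize (g 1 0 : ℝ) = c at *
  generalize (g 1 1 : ℝ) = d at *
  generalize (y 0 : ℝ) = y0 at *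
  generalize (y 1 : ℝ) = y1 at *
  refine ⟨((a * y0 + b * y1) * (a * y1 - b * y0) + (c * y0 + d * y1) * (c * y1 - d * y0)) / nv y,
    ?_, ?_⟩
  · rw [abs_div, abs_of_pos hn, div_le_iff₀ hn, hfr, hnv, abs_le]
    constructor <;>
    nlinarith [sq_nonneg ((a * y0 + b * y1) + (a * y1 - b * y0)),
      sq_nonneg ((a * y0 + b * y1) - (a * y1 - b * y0)),
      sq_nonneg ((c * y0 + d * y1) + (c * y1 - d * y0)),
      sq_nonneg ((c * y0 + d * y1) - (c * y1 - d * y0)),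
      sq_nonneg (a * y0 + b * y1), sq_nonneg (a * y1 - b * y0), sq_nonneg (c * y0 + d * y1),
      sq_nonneg (c * y1 - d * y0)]
  · generalize (k 0 0 : ℝ) = p
    generalize (k 0 1 : ℝ) = q
    generalize (k 1 0 : ℝ) = r
    generalize (k 1 1 : ℝ) = s
    have hne : y0 ^ 2 + y1 ^ 2 ≠ 0 := by rw [← hnv]; exact hn.ne'
    rw [hnv]
    congr 1
    · congr 1
      · congr 1
        linear_combination (s * y0 - q * y1) * hd
      · congr 1
        linear_combination (p * y1 - r * y0) * hd
    · congr 2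
      · congr 1
        field_simp
        ring
      · congr 1
        field_simp
        ring

lemma nv_mulVec_le (g : SLZ) (y : Fin 2 → ℤ) :
    nv ((g : Matrix (Fin 2) (Fin 2) ℤ).mulVec y) ≤ fr g * nv y := by
  simp only [nv, fr, Matrix.mulVec, dotProduct, Fin.sum_univ_two]
  push_cast
  nlinarith [sq_nonneg ((g 0 0 : ℝ) * y 1 - g 0 1 * y 0), sq_nonneg ((g 1 0 : ℝ) * y 1 - g 1 1 * y 0)]

lemma nv_le_mulVec (g : SLZ) (y : Fin 2 → ℤ) :
    nv y ≤ fr g * nv ((g : Matrix (Fin 2) (Fin 2) ℤ).mulVec y) := by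
  have hd := det_real g
  simp only [nv, fr, Matrix.mulVec, dotProduct, Fin.sum_univ_two]
  push_cast
  generalize (g 0 0 : ℝ) = a at *
  generalize (g 0 1 : ℝ) = b at *
  generalize (g 1 0 : ℝ) = c at *
  generalize (g 1 1 : ℝ) = d at *
  generalize (y 0 : ℝ) = y0 at *
  generalize (y 1 : ℝ) = y1 at *
  have e0 : y0 = d * (a * y0 + b * y1) - b * (c * y0 + d * y1) := by
    linear_combination -y0 * hd
  have e1 : y1 = a * (c * y0 + d * y1) - c * (a * y0 + b * y1) := by
    linear_combination -y1 * hd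
  generalize a * y0 + b * y1 = w0 at *
  generalize c * y0 + d * y1 = w1 at *
  rw [e0, e1]
  nlinarith [sq_nonneg (d * w1 + b * w0), sq_nonneg (a * w0 + c * w1)]

lemma qf_add {ε θ : ℝ} (hε : 0 < ε) (hε1 : ε ≤ 1) (hθ : 0 < θ) (hθ1 : θ ≤ 1)
    (y a : Fin 2 → ℤ) (hya : nv a ≤ ε * θ ^ 2 * nv y) (h : SLZ) :
    |qf ε (y + a) h - qf ε y h| ≤ 6 * θ * qf ε y h := by
  have hl := qf_lower ε ε le_rfl hε1 y h
  have hfr : 0 ≤ fr h := by have := two_le_fr h; linarith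
  have hu : nv a * fr h ≤ θ ^ 2 * qf ε y h := by
    calc nv a * fr h ≤ (ε * θ ^ 2 * nv y) * fr h := by gcongr
      _ = θ ^ 2 * (ε * (nv y * fr h)) := by ring
      _ ≤ _ := by gcongr
  have e : nv a * fr h = ((h 1 1 : ℝ) * a 0 - h 0 1 * a 1) ^ 2 +
    ((h 0 0 : ℝ) * a 1 - h 1 0 * a 0) ^ 2 +
    ((-(h 1 1 : ℝ) * a 1 - h 0 1 * a 0) ^ 2 + ((h 1 0 : ℝ) * a 1 + h 0 0 * a 0) ^ 2) := by
    unfold nv fr; ring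
  rw [e] at hu
  have e2 : qf ε (y + a) h =
    (((h 1 1 : ℝ) * y 0 - h 0 1 * y 1) + ((h 1 1 : ℝ) * a 0 - h 0 1 * a 1)) ^ 2 +
    (((h 0 0 : ℝ) * y 1 - h 1 0 * y 0) + ((h 0 0 : ℝ) * a 1 - h 1 0 * a 0)) ^ 2 +
    ε * (((-(h 1 1 : ℝ) * y 1 - h 0 1 * y 0) + (-(h 1 1 : ℝ) * a 1 - h 0 1 * a 0)) ^ 2 +
     (((h 1 0 : ℝ) * y 1 + h 0 0 * y 0) + ((h 1 0 : ℝ) * a 1 + h 0 0 * a 0)) ^ 2) := by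
    unfold qf; simp only [Pi.add_apply]; push_cast; ring
  rw [e2]
  have e3 : qf ε y h = ((h 1 1 : ℝ) * y 0 - h 0 1 * y 1) ^ 2 +
    ((h 0 0 : ℝ) * y 1 - h 1 0 * y 0) ^ 2 +
    ε * ((-(h 1 1 : ℝ) * y 1 - h 0 1 * y 0) ^ 2 + ((h 1 0 : ℝ) * y 1 + h 0 0 * y 0) ^ 2) := rfl
  rw [e3] at hu ⊢
  generalize (h 1 1 : ℝ) * y 0 - h 0 1 * y 1 = x1 at *
  generalize (h 0 0 : ℝ) * y 1 - h 1 0 * y 0 = x2 at *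
  generalize -(h 1 1 : ℝ) * y 1 - h 0 1 * y 0 = x3 at *
  generalize (h 1 0 : ℝ) * y 1 + h 0 0 * y 0 = x4 at *
  generalize (h 1 1 : ℝ) * a 0 - h 0 1 * a 1 = u1 at *
  generalize (h 0 0 : ℝ) * a 1 - h 1 0 * a 0 = u2 at *
  generalize -(h 1 1 : ℝ) * a 1 - h 0 1 * a 0 = u3 at *
  generalize (h 1 0 : ℝ) * a 1 + h 0 0 * a 0 = u4 at *
  have one : ∀ x u : ℝ, |(x + u) ^ 2 - x ^ 2| ≤ θ * x ^ 2 + 2 * u ^ 2 / θ := by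
    intro x u
    obtain ⟨v, rfl⟩ : ∃ v, u = θ * v := ⟨u / θ, by field_simp⟩
    have e : 2 * (θ * v) ^ 2 / θ = 2 * θ * v ^ 2 := by field_simp
    rw [e, abs_le]
    have hθ2 : θ ^ 2 ≤ θ := by nlinarith
    have := mul_le_mul_of_nonneg_right hθ2 (sq_nonneg v)
    constructor <;> nlinarith [mul_nonneg hθ.le (sq_nonneg (x + v)),
      mul_nonneg hθ.le (sq_nonneg (x - v)), mul_nonneg hθ.le (sq_nonneg v), sq_nonneg (θ * v)]
  have o1 := abs_le.1 (one x1 u1)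
  have o2 := abs_le.1 (one x2 u2)
  have o3 := abs_le.1 (one x3 u3)
  have o4 := abs_le.1 (one x4 u4)
  set Q := x1 ^ 2 + x2 ^ 2 + ε * (x3 ^ 2 + x4 ^ 2) with hQ
  have hQ0 : 0 ≤ Q := by positivity
  set U := u1 ^ 2 + u2 ^ 2 + (u3 ^ 2 + u4 ^ 2) with hU
  have hUle : 2 * U / θ ≤ 2 * θ * Q := by
    rw [div_le_iff₀ hθ]
    have : 2 * θ * Q * θ = 2 * (θ ^ 2 * Q) := by ring
    linarith
  have hsum : 2 * u1 ^ 2 / θ + 2 * u2 ^ 2 / θ + ε * (2 * u3 ^ 2 / θ + 2 * u4 ^ 2 / θ)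
      ≤ 2 * U / θ := by
    have p3 : 0 ≤ 2 * u3 ^ 2 / θ := by positivity
    have p4 : 0 ≤ 2 * u4 ^ 2 / θ := by positivity
    have : 2 * U / θ = 2 * u1 ^ 2 / θ + 2 * u2 ^ 2 / θ + (2 * u3 ^ 2 / θ + 2 * u4 ^ 2 / θ) := by
      rw [hU]; ring
    rw [this]
    have := mul_le_of_le_one_left (add_nonneg p3 p4) hε1
    linarith
  have k3 := mul_le_mul_of_nonneg_left o3.1 hε.le
  have k4 := mul_le_mul_of_nonneg_left o4.1 hε.le
  have k3' := mul_le_mul_of_nonneg_left o3.2 hε.le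
  have k4' := mul_le_mul_of_nonneg_left o4.2 hε.le
  have hQθ : θ * Q = θ * x1 ^ 2 + θ * x2 ^ 2 + ε * (θ * x3 ^ 2 + θ * x4 ^ 2) := by rw [hQ]; ring
  have hQθ0 : 0 ≤ θ * Q := by positivity
  clear_value U
  have ed : (x1 + u1) ^ 2 + (x2 + u2) ^ 2 + ε * ((x3 + u3) ^ 2 + (x4 + u4) ^ 2) - Q =
      ((x1 + u1) ^ 2 - x1 ^ 2) + ((x2 + u2) ^ 2 - x2 ^ 2) +
      (ε * ((x3 + u3) ^ 2 - x3 ^ 2) + ε * ((x4 + u4) ^ 2 - x4 ^ 2)) := by rw [hQ]; ring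
  rw [ed, abs_le]
  clear_value Q
  rw [mul_add] at hsum k3' k4' hQθ
  rw [mul_neg, mul_add] at k3 k4
  obtain ⟨o1, o1'⟩ := o1
  obtain ⟨o2, o2'⟩ := o2
  constructor <;> linarith

noncomputable def eps (n : ℕ) (j : ℤ) : ℝ := Real.exp (-(j : ℝ) / ((n : ℝ) + 1))

lemma eps_pos (n : ℕ) (j : ℤ) : 0 < eps n j := Real.exp_pos _

/-- index set of the time average -/
noncomputable def idx (n : ℕ) : Finset ℤ := Finset.Ico (((n : ℤ) + 1) ^ 2) (((n : ℤ) + 1) ^ 2 + ((n : ℤ) + 1) ^ 3)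

lemma idx_card (n : ℕ) : ((idx n).card : ℝ) = ((n : ℝ) + 1) ^ 3 := by
  unfold idx
  rw [Int.card_Ico, add_sub_cancel_left]
  have : (((((n : ℤ) + 1) ^ 3).toNat : ℤ) : ℝ) = ((n : ℝ) + 1) ^ 3 := by
    rw [Int.toNat_of_nonneg (by positivity)]; push_cast; rfl
  exact_mod_cast this

lemma eps_le_one (n : ℕ) (j : ℤ) (hj : j ∈ idx n) : eps n j ≤ 1 := by
  unfold eps
  rw [Real.exp_le_one_iff]
  have h1 : (((n : ℤ) + 1) ^ 2) ≤ j := (Finset.mem_Ico.1 hj).1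
  have h2 : (0 : ℤ) ≤ j := le_trans (by positivity) h1
  have h3 : (0 : ℝ) ≤ j := by exact_mod_cast h2
  apply div_nonpos_of_nonpos_of_nonneg
  · linarith
  · positivity

noncomputable def zet (n : ℕ) (y : Fin 2 → ℤ) : L1 :=
  if y = 0 then nrm (fun h => ((fr h) ^ 4)⁻¹)
  else (1 / ((n : ℝ) + 1) ^ 3) • ∑ j ∈ idx n, nrm (kf (eps n j) y)

lemma fr_inv_pos (h : SLZ) : 0 < ((fr h) ^ 4)⁻¹ := by
  have := two_le_fr h
  positivity

lemma zet_apply (n : ℕ) {y : Fin 2 → ℤ} (hy : y ≠ 0) (h : SLZ) :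
    zet n y h = (1 / ((n : ℝ) + 1) ^ 3) * ∑ j ∈ idx n, nrm (kf (eps n j) y) h := by
  unfold zet
  rw [if_neg hy, lp.coeFn_smul, Pi.smul_apply, lp.coeFn_sum, Finset.sum_apply, smul_eq_mul]

lemma zet_nonneg (n : ℕ) (y : Fin 2 → ℤ) (h : SLZ) : 0 ≤ zet n y h := by
  by_cases hy : y = 0
  · unfold zet
    rw [if_pos hy]
    exact nrm_nonneg summable_fr fr_inv_pos h
  · rw [zet_apply n hy]
    refine mul_nonneg (by positivity) (Finset.sum_nonneg fun j _ => ?_)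
    exact nrm_nonneg (summable_kf (eps_pos n j) hy) (kf_pos (eps_pos n j) hy) h

lemma zet_tsum (n : ℕ) (y : Fin 2 → ℤ) : ∑' h, zet n y h = 1 := by
  by_cases hy : y = 0
  · unfold zet
    rw [if_pos hy]
    exact nrm_tsum summable_fr fr_inv_pos
  · simp_rw [zet_apply n hy]
    rw [tsum_mul_left, Summable.tsum_finsetSum fun j _ => L1.summable _]
    rw [Finset.sum_congr rfl fun j _ =>
      nrm_tsum (summable_kf (eps_pos n j) hy) (kf_pos (eps_pos n j) hy)]
    rw [Finset.sum_const, nsmul_eq_mul, idx_card]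
    field_simp

lemma finite_nv_lt (M : ℝ) : {y : Fin 2 → ℤ | nv y < M}.Finite := by
  obtain ⟨N, hN⟩ := exists_nat_gt M
  refine (Set.finite_Icc (fun _ => -(N : ℤ)) (fun _ : Fin 2 => (N : ℤ))).subset ?_
  intro y hy
  have hy' : (y 0) ^ 2 + (y 1) ^ 2 < (N : ℤ) := by
    have : nv y < N := lt_trans hy hN
    unfold nv at this
    exact_mod_cast this
  have h0 : -(N : ℤ) ≤ y 0 ∧ y 0 ≤ N := by constructor <;> nlinarith [sq_nonneg (y 0), sq_nonneg (y 1)]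
  have h1 : -(N : ℤ) ≤ y 1 ∧ y 1 ≤ N := by constructor <;> nlinarith [sq_nonneg (y 0), sq_nonneg (y 1)]
  constructor
  · intro i; fin_cases i
    · exact h0.1
    · exact h1.1
  · intro i; fin_cases i
    · exact h0.2
    · exact h1.2

lemma zet_add (n : ℕ) (a : Fin 2 → ℤ) (η : ℝ) (hη : 0 < η) :
    ∀ᶠ y in cofinite, ‖zet n (y + a) - zet n y‖ ≤ η := by
  obtain ⟨θ, hθ0, hθ1, hθη⟩ : ∃ θ : ℝ, 0 < θ ∧ θ ≤ 1 / 12 ∧ 360 * θ ≤ η :=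
    ⟨min (1 / 12) (η / 360), by positivity, min_le_left _ _, by
      have := min_le_right (1 / 12 : ℝ) (η / 360); linarith⟩
  have E1 : ∀ᶠ y : Fin 2 → ℤ in cofinite, y ≠ 0 := eventually_cofinite_ne 0
  have E2 : ∀ᶠ y : Fin 2 → ℤ in cofinite, y ≠ -a := eventually_cofinite_ne _
  have E3 : ∀ᶠ y : Fin 2 → ℤ in cofinite, ∀ j ∈ idx n, nv a ≤ eps n j * θ ^ 2 * nv y := by
    rw [Filter.eventually_all_finset]
    intro j _
    have hc : 0 < eps n j * θ ^ 2 := mul_pos (eps_pos n j) (by positivity)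
    have := (finite_nv_lt (nv a / (eps n j * θ ^ 2))).compl_mem_cofinite
    filter_upwards [this] with y hy
    have : nv a / (eps n j * θ ^ 2) ≤ nv y := not_lt.1 hy
    rw [div_le_iff₀ hc] at this
    linarith
  filter_upwards [E1, E2, E3] with y h1 h2 h3
  have h2' : y + a ≠ 0 := fun h => h2 (eq_neg_of_add_eq_zero_left h)
  unfold zet
  rw [if_neg h1, if_neg h2', ← smul_sub, ← Finset.sum_sub_distrib, norm_smul,
    Real.norm_of_nonneg (by positivity)]
  have hb : ‖∑ j ∈ idx n, (nrm (kf (eps n j) (y + a)) - nrm (kf (eps n j) y))‖ ≤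
      (idx n).card • η := by
    refine (norm_sum_le _ _).trans (Finset.sum_le_card_nsmul _ _ _ ?_)
    intro j hj
    refine (nrm_close (summable_kf (eps_pos n j) h1) (kf_pos (eps_pos n j) h1)
      (summable_kf (eps_pos n j) h2') (kf_pos (eps_pos n j) h2') (δ := 30 * (6 * θ)) ?_).trans
      (by linarith)
    intro h
    exact inv_pow_close (qf_pos (eps_pos n j) h1 h) (by linarith)
      (qf_add (eps_pos n j) (eps_le_one n j hj) hθ0 (by linarith) y a (h3 j hj) h)
  rw [nsmul_eq_mul, idx_card] at hb
  have hp : (0 : ℝ) < ((n : ℝ) + 1) ^ 3 := by positivity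
  rw [one_div, inv_mul_le_iff₀ hp]
  exact hb

set_option maxHeartbeats 1600000 in
lemma zet_equiv_bound (g : SLZ) (n : ℕ) (τ : ℝ) (hτ : 0 < τ) (hτ1 : τ ≤ 1 / 8)
    (H1 : Real.exp (1 / ((n : ℝ) + 1)) ≤ 1 + τ)
    (H2 : Real.exp (-((n : ℝ) + 1) + (2 * Real.log (fr g) + 1)) * (fr g) ^ 2 ≤ τ ^ 2)
    (H3 : 2 * (2 * Real.log (fr g) + 1) * (1 / ((n : ℝ) + 1)) ≤ τ)
    {y : Fin 2 → ℤ} (hy : y ≠ 0) :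
    ∑' h, |zet n ((g : Matrix (Fin 2) (Fin 2) ℤ).mulVec y) h - zet n y (g⁻¹ * h)| ≤ 241 * τ := by
  have hC := two_le_fr g
  have hC0 : 0 < fr g := by linarith
  have hlC : 0 ≤ Real.log (fr g) := Real.log_nonneg (by linarith)
  set w := (g : Matrix (Fin 2) (Fin 2) ℤ).mulVec y with hw
  have hn := nv_pos hy
  have hnw : 0 < nv w := by
    have := nv_le_mulVec g y
    rw [← hw] at this
    by_contra hcon
    nlinarith
  have hw0 : w ≠ 0 := by
    intro h0
    rw [h0] at hnw
    simp [nv] at hnw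
  set p : ℝ := (n : ℝ) + 1 with hp
  have hp1 : 1 ≤ p := by rw [hp]; linarith [Nat.cast_nonneg (α := ℝ) n]
  have hp0 : 0 < p := by linarith
  set β := nv w / nv y with hβ
  have hβ0 : 0 < β := by positivity
  have hlog : |Real.log β| ≤ Real.log (fr g) := by
    rw [abs_le]
    constructor
    · rw [← Real.log_inv]
      apply Real.log_le_log (by positivity)
      rw [hβ, le_div_iff₀ hn, inv_mul_le_iff₀ hC0]
      exact nv_le_mulVec g y
    · apply Real.log_le_log hβ0
      rw [hβ, div_le_iff₀ hn]
      exact nv_mulVec_le g y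
  obtain ⟨hl1, hl2⟩ := abs_le.1 hlog
  set m : ℤ := ⌊p * (2 * Real.log β)⌋ with hm
  have hm1 : (m : ℝ) ≤ p * (2 * Real.log β) := Int.floor_le _
  have hm2 : p * (2 * Real.log β) < m + 1 := Int.lt_floor_add_one _
  have hmabs : |(m : ℝ)| ≤ p * (2 * Real.log (fr g) + 1) := by
    rw [abs_le]; constructor <;> nlinarith
  have hmdiv1 : (m : ℝ) / p ≤ 2 * Real.log β := by rw [div_le_iff₀ hp0]; linarith
  have hmdiv2 : 2 * Real.log β ≤ m / p + 1 / p := by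
    rw [← add_div, le_div_iff₀ hp0]; linarith
  -- the translated densities
  let F : ℤ → L1 := fun j => nrm (kf (eps n j) w)
  let G : ℤ → L1 := fun j => nrm (fun x => kf (eps n j) y (g⁻¹ * x))
  have hsG : ∀ j, Summable (fun x => kf (eps n j) y (g⁻¹ * x)) := fun j =>
    (Equiv.mulLeft g⁻¹).summable_iff.2 (summable_kf (eps_pos n j) hy)
  have hF1 : ∀ j, ‖F j‖ ≤ 1 := fun j =>
    (nrm_norm (summable_kf (eps_pos n j) hw0) (kf_pos (eps_pos n j) hw0)).le
  have hclose : ∀ j ∈ idx n, ‖F (j + m) - G j‖ ≤ 240 * τ := by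
    intro j hj
    have hj1 : p ^ 2 ≤ (j : ℝ) := by
      have : (((n : ℤ) + 1) ^ 2) ≤ j := (Finset.mem_Ico.1 hj).1
      rw [hp]; exact_mod_cast this
    have hβ2 : β ^ 2 = Real.exp (2 * Real.log β) := by
      rw [mul_comm, Real.exp_mul, Real.exp_log hβ0]; norm_num
    have hprod : eps n (j + m) * β ^ 2 = eps n j * Real.exp (2 * Real.log β - m / p) := by
      unfold eps
      rw [hβ2, ← Real.exp_add, ← Real.exp_add, ← hp]
      congr 1
      push_cast
      ring
    have c1 : eps n j ≤ eps n (j + m) * β ^ 2 := by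
      rw [hprod]
      exact le_mul_of_one_le_right (eps_pos n j).le (Real.one_le_exp (by linarith))
    have c2 : eps n (j + m) * β ^ 2 ≤ (1 + τ) * eps n j := by
      rw [hprod, mul_comm]
      refine mul_le_mul_of_nonneg_right (le_trans ?_ H1) (eps_pos n j).le
      exact Real.exp_le_exp.2 (by linarith)
    have c3 : eps n (j + m) * (fr g) ^ 2 ≤ τ ^ 2 := by
      refine le_trans (mul_le_mul_of_nonneg_right ?_ (by positivity)) H2
      unfold eps
      rw [← hp]
      apply Real.exp_le_exp.2
      rw [div_le_iff₀ hp0]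
      push_cast
      nlinarith [(abs_le.1 hmabs).1]
    refine (nrm_close (hsG j) (fun h => kf_pos (eps_pos n j) hy _)
      (summable_kf (eps_pos n (j + m)) hw0) (kf_pos (eps_pos n _) hw0)
      (δ := 30 * (4 * τ)) ?_).trans (by linarith)
    intro h
    refine inv_pow_close (qf_pos (eps_pos n j) hy _) (by linarith) ?_
    obtain ⟨α, hα, e⟩ := qf_equiv (eps n (j + m)) g (g⁻¹ * h) y hy
    rw [mul_inv_cancel_left] at e
    rw [← hw, ← hβ] at e
    rw [e]
    exact core_est (eps_pos n j) (eps_pos n _) hα c1 c2 c3 hτ (by linarith)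
  have hsum : ∑' h, |zet n w h - zet n y (g⁻¹ * h)| =
      ‖(1 / p ^ 3) • ∑ j ∈ idx n, (F j - G j)‖ := by
    rw [L1.norm_eq]
    refine tsum_congr fun h => ?_
    rw [zet_apply n hw0, zet_apply n hy, lp.coeFn_smul, Pi.smul_apply, lp.coeFn_sum,
      Finset.sum_apply, smul_eq_mul, ← mul_sub, ← Finset.sum_sub_distrib]
    congr 2
    refine Finset.sum_congr rfl fun j _ => ?_
    rw [lp.coeFn_sub, Pi.sub_apply, nrm_translate (summable_kf (eps_pos n j) hy)]
  have hdec : ∑ j ∈ idx n, (F j - G j) =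
      ∑ j ∈ idx n, (F (j + m) - G j) - ∑ j ∈ idx n, (F (j + m) - F j) := by
    rw [← Finset.sum_sub_distrib]
    exact Finset.sum_congr rfl fun j _ => by abel
  have hb1 : ‖∑ j ∈ idx n, (F (j + m) - G j)‖ ≤ p ^ 3 * (240 * τ) := by
    rw [hp, ← idx_card, ← nsmul_eq_mul]
    exact (norm_sum_le _ _).trans (Finset.sum_le_card_nsmul _ _ _ hclose)
  have hb2 : ‖∑ j ∈ idx n, (F (j + m) - F j)‖ ≤ 2 * |(m : ℝ)| :=
    shift_bound F hF1 _ _ (le_add_of_nonneg_right (by positivity)) m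
  have hb3 : 2 * |(m : ℝ)| ≤ p ^ 3 * τ := by
    have h3 : 2 * (2 * Real.log (fr g) + 1) ≤ τ * p := by
      rw [mul_one_div, div_le_iff₀ hp0] at H3; exact H3
    calc 2 * |(m : ℝ)| ≤ p * (2 * (2 * Real.log (fr g) + 1)) := by linarith
      _ ≤ p * (τ * p) := by gcongr
      _ = p ^ 2 * τ := by ring
      _ ≤ p ^ 3 * τ := by
        gcongr
        · norm_num
  rw [hsum, norm_smul, Real.norm_of_nonneg (by positivity), hdec, one_div,
    inv_mul_le_iff₀ (by positivity)]
  refine (norm_sub_le _ _).trans ?_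
  linarith

lemma zet_equiv (g : SLZ) (η : ℝ) (hη : 0 < η) :
    ∀ᶠ n : ℕ in atTop, ∀ y : Fin 2 → ℤ, y ≠ 0 →
      ∑' h, |zet n ((g : Matrix (Fin 2) (Fin 2) ℤ).mulVec y) h - zet n y (g⁻¹ * h)| ≤ η := by
  obtain ⟨τ, hτ0, hτ1, hτη⟩ : ∃ τ : ℝ, 0 < τ ∧ τ ≤ 1 / 8 ∧ 241 * τ ≤ η :=
    ⟨min (1 / 8) (η / 241), by positivity, min_le_left _ _, by
      have := min_le_right (1 / 8 : ℝ) (η / 241); linarith⟩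
  have t := tendsto_one_div_add_atTop_nhds_zero_nat (𝕜 := ℝ)
  have T1 : Tendsto (fun n : ℕ => Real.exp (1 / ((n : ℝ) + 1))) atTop (𝓝 1) := by
    have := (Real.continuous_exp.tendsto 0).comp t
    rwa [Real.exp_zero] at this
  have T2 : Tendsto (fun n : ℕ => Real.exp (-((n : ℝ) + 1) + (2 * Real.log (fr g) + 1)) *
      (fr g) ^ 2) atTop (𝓝 0) := by
    rw [← zero_mul ((fr g) ^ 2)]
    refine Tendsto.mul_const _ (Real.tendsto_exp_atBot.comp ?_)
    apply tendsto_atBot_add_const_right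
    apply tendsto_neg_atTop_atBot.comp
    exact tendsto_atTop_add_const_right _ _ tendsto_natCast_atTop_atTop
  have T3 : Tendsto (fun n : ℕ => 2 * (2 * Real.log (fr g) + 1) * (1 / ((n : ℝ) + 1)))
      atTop (𝓝 0) := by
    have := t.const_mul (2 * (2 * Real.log (fr g) + 1))
    rwa [mul_zero] at this
  filter_upwards [T1.eventually_le_const (by linarith : 1 < 1 + τ),
    T2.eventually_le_const (by positivity : 0 < τ ^ 2), T3.eventually_le_const hτ0] with n a b c y hy
  exact (zet_equiv_bound g n τ hτ0 hτ1 a b c hy).trans hτη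


/-- The function-level formulation of topological amenability of the
`SL(2,ℤ)`-action on the Higson corona of `ℤ²`: there is a sequence of maps
`ζ_n : ℤ² → P(SL(2,ℤ))` into probability densities with
(i) `‖ζ_n(y + a) − ζ_n(y)‖₁ → 0` along the cofinite filter for every `a`, and
(ii) for every `g`, `limsup_{y → ∞} ‖ζ_n(g·y) − g·ζ_n(y)‖₁ → 0` as `n → ∞`. -/
theorem stmt_4 :
    ∃ ζ : ℕ → (Fin 2 → ℤ) → (Matrix.SpecialLinearGroup (Fin 2) ℤ → ℝ),
      -- each ζ_n y is a probability density on SL(2,ℤ)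
      (∀ n y, (∀ h, 0 ≤ ζ n y h) ∧ Summable (ζ n y) ∧ ∑' h, ζ n y h = 1) ∧
      -- (i) asymptotic invariance under translations of ℤ²
      (∀ n, ∀ a : Fin 2 → ℤ,
        Filter.Tendsto (fun y => ∑' h, |ζ n (y + a) h - ζ n y h|)
          Filter.cofinite (nhds 0)) ∧
      -- (ii) asymptotic equivariance in the limsup sense
      (∀ g : Matrix.SpecialLinearGroup (Fin 2) ℤ,
        Filter.Tendsto (fun n =>
            Filter.limsup
              (fun y => ∑' h,
                |ζ n ((g : Matrix (Fin 2) (Fin 2) ℤ).mulVec y) h - ζ n y (g⁻¹ * h)|)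
              Filter.cofinite)
          Filter.atTop (nhds 0)) := by
  refine ⟨fun n y h => zet n y h, fun n y => ⟨zet_nonneg n y, L1.summable _, zet_tsum n y⟩, ?_, ?_⟩
  · intro n a
    rw [Metric.tendsto_nhds]
    intro η hη
    filter_upwards [zet_add n a (η / 2) (by positivity)] with y hy
    rw [L1.norm_eq] at hy
    simp only [lp.coeFn_sub, Pi.sub_apply] at hy
    rw [Real.dist_eq, sub_zero, abs_of_nonneg (tsum_nonneg fun _ => abs_nonneg _)]
    linarith
  · intro g
    rw [Metric.tendsto_nhds]
    intro η hη
    filter_upwards [zet_equiv g (η / 2) (by positivity)] with n hn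
    have hev : ∀ᶠ y : Fin 2 → ℤ in cofinite,
        ∑' h, |zet n ((g : Matrix (Fin 2) (Fin 2) ℤ).mulVec y) h - zet n y (g⁻¹ * h)| ≤ η / 2 := by
      filter_upwards [eventually_cofinite_ne (0 : Fin 2 → ℤ)] with y hy using hn y hy
    have hnn : ∀ᶠ y : Fin 2 → ℤ in cofinite, 0 ≤
        ∑' h, |zet n ((g : Matrix (Fin 2) (Fin 2) ℤ).mulVec y) h - zet n y (g⁻¹ * h)| :=
      Eventually.of_forall fun y => tsum_nonneg fun _ => abs_nonneg _
    have hup := limsup_le_of_le (isCoboundedUnder_le_of_eventually_le _ hnn) hev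
    have hlo := le_limsup_of_frequently_le hnn.frequently (isBoundedUnder_of_eventually_le hev)
    rw [Real.dist_eq, sub_zero, abs_of_nonneg hlo]
    linarith
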